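/- arXiv:2405.14250 — 10 statements merged into one kernel-verified Lean document; each statement's English description precedes it below -/
import Mathlib

section
/- Let d : ℕ, let Σ be a real symmetric positive semidefinite d×d matrix, let β : ℝ → ℝ be continuous with β s > 0 for all s, set B t = ∫_0^t β s ds and Σ_t = exp(−2·B t)·Σ + (1 − exp(−2·B t))·I, and fix T > 0. Then for every s ∈ [0, T), the matrix-valued map s ↦ exp(2·(B T − B (T−s))) • (Σ_{T−s})⁻¹ has derivative (2·β (T−s)·exp(2·(B T − B (T−s)))) • ((Σ_{T−s})⁻¹ * (Σ_{T−s})⁻¹) at s. -/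
open Matrix

attribute [local instance] Matrix.normedAddCommGroup Matrix.normedSpace

theorem aux_generic {R : Type*} [NormedRing R] [NormedAlgebra ℝ R] [HasSummableGeomSeries R]
    (e : ℝ → ℝ) (b : ℝ) (F : ℝ → R) (s : ℝ)
    (he : HasDerivAt e (2 * b * e s) s)
    (hF : HasDerivAt F ((2 * b) • (F s - 1)) s) (hu : IsUnit (F s)) :
    HasDerivAt (fun s => e s • Ring.inverse (F s))
      ((2 * b * e s) • (Ring.inverse (F s) * Ring.inverse (F s))) s := by
  obtain ⟨u, hu⟩ := hu
  have h1 := hasFDerivAt_ringInverse (𝕜 := ℝ) u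
  rw [hu] at h1
  have h2 := he.smul (h1.comp_hasDerivAt s hF)
  refine h2.congr_deriv ?_
  simp only [Function.comp, ← hu, Ring.inverse_unit]
  simp [mul_sub, sub_mul, smul_smul, smul_sub]
  have : e s * (2 * b) = 2 * b * e s := by ring
  rw [this]
  abel

/-- Key antiderivative identity in the proof of Proposition 2:
for `A_s = e^{2 (B T - B (T-s))} Σ_{T-s}⁻¹` one has
`dA_s = 2 β (T-s) e^{2 (B T - B (T-s))} Σ_{T-s}⁻² ds` on `[0, T)`. -/
theorem backward_sde_antiderivative
    (d : ℕ) (S : Matrix (Fin d) (Fin d) ℝ)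
    (hS_sym : S.IsSymm) (hS_psd : S.PosSemidef)
    (β : ℝ → ℝ) (hβ : Continuous β) (hβpos : ∀ s, 0 < β s)
    (B : ℝ → ℝ) (hB : ∀ t, B t = ∫ s in (0:ℝ)..t, β s)
    (St : ℝ → Matrix (Fin d) (Fin d) ℝ)
    (hSt : ∀ t, St t = Real.exp (-2 * B t) • S
      + (1 - Real.exp (-2 * B t)) • (1 : Matrix (Fin d) (Fin d) ℝ))
    (T : ℝ) (hT : 0 < T)
    (s : ℝ) (hs : s ∈ Set.Ico (0 : ℝ) T) :
    HasDerivAt (fun s => Real.exp (2 * (B T - B (T - s))) • (St (T - s))⁻¹)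
      ((2 * β (T - s) * Real.exp (2 * (B T - B (T - s)))) •
        ((St (T - s))⁻¹ * (St (T - s))⁻¹)) s := by
  have hBd : ∀ t, HasDerivAt B (β t) t := by
    intro t
    have : B = fun t => ∫ s in (0:ℝ)..t, β s := funext hB
    rw [this]
    exact intervalIntegral.integral_hasDerivAt_right (hβ.intervalIntegrable _ _)
      hβ.aestronglyMeasurable.stronglyMeasurableAtFilter hβ.continuousAt
  have hBs : HasDerivAt (fun s => B (T - s)) (-β (T - s)) s := by
    have h := (hBd (T - s)).comp s ((hasDerivAt_id s).const_sub T)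
    simpa [Function.comp_def] using h
  have hpos : 0 < T - s := by linarith [hs.2]
  have hBpos : 0 < B (T - s) := by
    rw [hB]
    exact intervalIntegral.intervalIntegral_pos_of_pos (hβ.intervalIntegrable _ _) hβpos hpos
  have hlt : Real.exp (-2 * B (T - s)) < 1 := by
    rw [Real.exp_lt_one_iff]; linarith
  have hunit : IsUnit (St (T - s)) := by
    rw [hSt]
    have h1 : (Real.exp (-2 * B (T - s)) • S).PosSemidef := hS_psd.smul (Real.exp_pos _).le
    have h2 : ((1 - Real.exp (-2 * B (T - s))) • (1 : Matrix (Fin d) (Fin d) ℝ)).PosDef :=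
      Matrix.PosDef.one.smul (by linarith)
    exact (Matrix.PosDef.posSemidef_add h1 h2).isUnit
  have he : HasDerivAt (fun s => Real.exp (2 * (B T - B (T - s))))
      (2 * β (T - s) * Real.exp (2 * (B T - B (T - s)))) s := by
    refine (((hBs.const_sub (B T)).const_mul 2).exp).congr_deriv ?_
    ring
  have hg : HasDerivAt (fun s => Real.exp (-2 * B (T - s)))
      (2 * β (T - s) * Real.exp (-2 * B (T - s))) s := by
    refine ((hBs.const_mul (-2)).exp).congr_deriv ?_
    ring
  have hF : HasDerivAt (fun s => St (T - s)) ((2 * β (T - s)) • (St (T - s) - 1)) s := by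
    simp only [hSt]
    refine ((hg.smul_const S).add ((hg.const_sub 1).smul_const 1)).congr_deriv ?_
    ext i j
    simp
    ring
  simp only [Matrix.nonsing_inv_eq_ringInverse]
  exact @aux_generic _ Matrix.linftyOpNormedRing Matrix.linftyOpNormedAlgebra _
    (fun s => Real.exp (2 * (B T - B (T - s)))) (β (T - s)) (fun s => St (T - s)) s he hF hunit
end

section
/- Let d : ℕ, let Σ be a real symmetric positive semidefinite d×d matrix, let β : ℝ → ℝ be continuous with β s > 0 for all s, set B t = ∫_0^t β s ds and Σ_t = exp(−2·B t)·Σ + (1 − exp(−2·B t))·I, and fix T > 0 and t ∈ [0, T). Write C = B T − B (T−t), A = exp(−C) • (Σ_{T−t} * (Σ_T)⁻¹) and K = Σ_{T−t} − exp(−2·C) • (Σ_{T−t} * Σ_{T−t} * (Σ_T)⁻¹). Then for every d×d real matrix M: A * M * Aᵀ + K = Σ_{T−t} + exp(−2·C) • (Σ_{T−t} * Σ_{T−t} * (Σ_T)⁻¹ * ((Σ_{T−t})⁻¹ * M * (Σ_T)⁻¹ * Σ_{T−t} − I)). -/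
open Matrix

/-- Equation (14) of Proposition 2: the covariance of the backward SDE solution
`y_t = A y₀ + ξ_t` satisfies
`A M Aᵀ + K = Σ_{T-t} + e^{-2C} Σ_{T-t}² Σ_T⁻¹ (Σ_{T-t}⁻¹ M Σ_T⁻¹ Σ_{T-t} - I)`. -/
theorem backward_sde_covariance
    (d : ℕ) (S : Matrix (Fin d) (Fin d) ℝ)
    (hS_sym : S.IsSymm) (hS_psd : S.PosSemidef)
    (β : ℝ → ℝ) (hβ : Continuous β) (hβpos : ∀ s, 0 < β s)
    (B : ℝ → ℝ) (hB : ∀ t, B t = ∫ s in (0:ℝ)..t, β s)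
    (St : ℝ → Matrix (Fin d) (Fin d) ℝ)
    (hSt : ∀ t, St t = Real.exp (-2 * B t) • S
      + (1 - Real.exp (-2 * B t)) • (1 : Matrix (Fin d) (Fin d) ℝ))
    (T : ℝ) (hT : 0 < T) (t : ℝ) (ht : t ∈ Set.Ico (0 : ℝ) T)
    (C : ℝ) (hC : C = B T - B (T - t))
    (A K : Matrix (Fin d) (Fin d) ℝ)
    (hA : A = Real.exp (-C) • (St (T - t) * (St T)⁻¹))
    (hK : K = St (T - t)
      - Real.exp (-2 * C) • (St (T - t) * St (T - t) * (St T)⁻¹))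
    (M : Matrix (Fin d) (Fin d) ℝ) :
    A * M * Aᵀ + K
      = St (T - t) + Real.exp (-2 * C) •
          (St (T - t) * St (T - t) * (St T)⁻¹ *
            ((St (T - t))⁻¹ * M * (St T)⁻¹ * St (T - t)
              - (1 : Matrix (Fin d) (Fin d) ℝ))) := by
  have hBpos : ∀ u, 0 < u → 0 < B u := by
    intro u hu
    rw [hB]
    exact intervalIntegral.intervalIntegral_pos_of_pos (hβ.intervalIntegrable _ _) hβpos hu
  have hdet : ∀ u, 0 < u → IsUnit (St u).det := by
    intro u hu
    have h1 : Real.exp (-2 * B u) < 1 := by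
      rw [Real.exp_lt_one_iff]
      linarith [hBpos u hu]
    have hp : (St u).PosDef := by
      rw [hSt]
      exact Matrix.PosDef.posSemidef_add (hS_psd.smul (Real.exp_pos _).le)
        (Matrix.PosDef.one.smul (by linarith))
    exact hp.det_pos.ne'.isUnit
  have hsym : ∀ u, (St u)ᵀ = St u := by
    intro u
    rw [hSt]
    simp [hS_sym.eq]
  have hcomm : St (T - t) * St T = St T * St (T - t) := by
    rw [hSt, hSt]
    simp only [add_mul, mul_add, smul_mul_assoc, mul_smul_comm, mul_one, one_mul, smul_add]
    simp only [smul_smul]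
    module
  have hP := hdet (T - t) (by linarith [ht.2])
  have hQ := hdet T hT
  have hPs := hsym (T - t)
  have hQs := hsym T
  generalize St (T - t) = P at *
  generalize St T = Q at *
  have hc : P * Q⁻¹ = Q⁻¹ * P := by
    calc P * Q⁻¹ = Q⁻¹ * (Q * P) * Q⁻¹ := by
          rw [← mul_assoc, Matrix.nonsing_inv_mul _ hQ, one_mul]
      _ = Q⁻¹ * P := by
          rw [← hcomm, mul_assoc, mul_assoc, Matrix.mul_nonsing_inv _ hQ, mul_one]
  have he : Real.exp (-2 * C) = Real.exp (-C) * Real.exp (-C) := by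
    rw [← Real.exp_add]; ring_nf
  have hkey : P * P * Q⁻¹ * (P⁻¹ * M * Q⁻¹ * P) = P * Q⁻¹ * M * (Q⁻¹ * P) := by
    rw [mul_assoc P P, hc]
    calc P * (Q⁻¹ * P) * (P⁻¹ * M * Q⁻¹ * P) = P * Q⁻¹ * (P * P⁻¹) * M * (Q⁻¹ * P) := by
          simp only [mul_assoc]
      _ = _ := by rw [Matrix.mul_nonsing_inv _ hP, mul_one, hc]
  have hAt : Aᵀ = Real.exp (-C) • (Q⁻¹ * P) := by
    rw [hA, Matrix.transpose_smul, Matrix.transpose_mul, Matrix.transpose_nonsing_inv, hPs, hQs]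
  rw [hAt, hA, hK, mul_sub, hkey, mul_one, he]
  simp only [smul_mul_assoc, mul_smul_comm, smul_smul, smul_sub]
  abel
end

section
/- Let d : ℕ, let Σ be a real symmetric positive semidefinite d×d matrix, let β : ℝ → ℝ be continuous with β s > 0 for all s, set B t = ∫_0^t β s ds and Σ_t = exp(−2·B t)·Σ + (1 − exp(−2·B t))·I, and fix T > 0 and t ∈ [0, T). Write C = B T − B (T−t), A = exp(−C) • (Σ_{T−t} * (Σ_T)⁻¹) and K = Σ_{T−t} − exp(−2·C) • (Σ_{T−t} * Σ_{T−t} * (Σ_T)⁻¹). Then for every d×d real symmetric matrix M with M * Σ = Σ * M: A * M * Aᵀ + K = Σ_{T−t} + exp(−2·C) • (Σ_{T−t} * Σ_{T−t} * (Σ_T)⁻¹ * (Σ_T)⁻¹ * (M − Σ_T)). -/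
open Matrix

/-- Equation (15) of Proposition 2 (commuting case): the covariance of the backward SDE
solution `y_t = A y₀ + ξ_t` satisfies
`A M Aᵀ + K = Σ_{T-t} + e^{-2C} Σ_{T-t}² Σ_T⁻² (M - Σ_T)` when `M` commutes with `Σ`. -/
theorem backward_sde_covariance_commuting
    (d : ℕ) (S : Matrix (Fin d) (Fin d) ℝ)
    (hS_sym : S.IsSymm) (hS_psd : S.PosSemidef)
    (β : ℝ → ℝ) (hβ : Continuous β) (hβpos : ∀ s, 0 < β s)
    (B : ℝ → ℝ) (hB : ∀ t, B t = ∫ s in (0:ℝ)..t, β s)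
    (St : ℝ → Matrix (Fin d) (Fin d) ℝ)
    (hSt : ∀ t, St t = Real.exp (-2 * B t) • S
      + (1 - Real.exp (-2 * B t)) • (1 : Matrix (Fin d) (Fin d) ℝ))
    (T : ℝ) (hT : 0 < T) (t : ℝ) (ht : t ∈ Set.Ico (0 : ℝ) T)
    (C : ℝ) (hC : C = B T - B (T - t))
    (A K : Matrix (Fin d) (Fin d) ℝ)
    (hA : A = Real.exp (-C) • (St (T - t) * (St T)⁻¹))
    (hK : K = St (T - t)
      - Real.exp (-2 * C) • (St (T - t) * St (T - t) * (St T)⁻¹))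
    (M : Matrix (Fin d) (Fin d) ℝ)
    (hM_sym : M.IsSymm) (hMcomm : M * S = S * M) :
    A * M * Aᵀ + K
      = St (T - t) + Real.exp (-2 * C) •
          (St (T - t) * St (T - t) * (St T)⁻¹ * (St T)⁻¹ * (M - St T)) := by
  have hBT : 0 < B T := by
    rw [hB]
    exact intervalIntegral.intervalIntegral_pos_of_pos (hβ.intervalIntegrable _ _) hβpos hT
  have hpd : (St T).PosDef := by
    rw [hSt]
    refine Matrix.PosDef.posSemidef_add (hS_psd.smul (Real.exp_pos _).le) ?_
    refine Matrix.PosDef.smul Matrix.PosDef.one ?_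
    have : Real.exp (-2 * B T) < 1 := Real.exp_lt_one_iff.2 (by linarith)
    linarith
  have hu : IsUnit (St T).det := (Matrix.isUnit_iff_isUnit_det _).1 hpd.isUnit
  have hRQ : (St T)⁻¹ * St T = 1 := Matrix.nonsing_inv_mul _ hu
  have hQR : St T * (St T)⁻¹ = 1 := Matrix.mul_nonsing_inv _ hu
  have hsym : ∀ u, (St u)ᵀ = St u := by
    intro u
    rw [hSt]
    simp [hS_sym.eq]
  have hcomm : ∀ (X : Matrix (Fin d) (Fin d) ℝ), X * S = S * X → ∀ u, X * St u = St u * X := by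
    intro X hX u
    rw [hSt]
    simp [mul_add, add_mul, hX]
  have hMP := hcomm M hMcomm (T - t)
  have hMQ := hcomm M hMcomm T
  have hPQ := hcomm (St (T - t)) (hcomm S rfl (T - t)).symm T
  have hinv : ∀ X : Matrix (Fin d) (Fin d) ℝ, X * St T = St T * X →
      (St T)⁻¹ * X = X * (St T)⁻¹ := by
    intro X hX
    calc (St T)⁻¹ * X = (St T)⁻¹ * (X * St T) * (St T)⁻¹ := by
          rw [mul_assoc, mul_assoc, hQR, mul_one]
      _ = X * (St T)⁻¹ := by rw [hX, ← mul_assoc, hRQ, one_mul]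
  have hRM := hinv M hMQ
  have hRP := hinv _ hPQ
  have he : Real.exp (-2 * C) = Real.exp (-C) * Real.exp (-C) := by
    rw [← Real.exp_add]; ring_nf
  have hAT : Aᵀ = Real.exp (-C) • ((St T)⁻¹ * St (T - t)) := by
    rw [hA, Matrix.transpose_smul, Matrix.transpose_mul, Matrix.transpose_nonsing_inv,
      hsym, hsym]
  rw [hAT, hA, hK, he]
  generalize St (T - t) = P at *
  generalize (St T)⁻¹ = R at *
  generalize St T = Q at *
  have h1 : P * R * M * (R * P) = P * P * R * R * M := by
    calc P * R * M * (R * P) = P * R * (M * P) * R := by rw [hRP]; simp only [mul_assoc]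
      _ = P * (R * P) * (M * R) := by rw [hMP]; simp only [mul_assoc]
      _ = P * P * R * R * M := by rw [hRP, ← hRM]; simp only [mul_assoc]
  have h2 : P * P * R * R * Q = P * P * R := by
    rw [mul_assoc _ R Q, hRQ, mul_one]
  rw [mul_sub, h2, smul_mul_assoc, smul_mul_assoc, mul_smul_comm, h1, smul_smul, smul_sub]
  abel
end

section
/- Let d : ℕ, let Σ be a real symmetric positive semidefinite d×d matrix, let β : ℝ → ℝ be continuous with β s > 0 for all s, set B t = ∫_0^t β s ds and Σ_t = exp(−2·B t)·Σ + (1 − exp(−2·B t))·I, fix T > 0 and t ∈ [0, T], and define Σ̃_t = Σ_t + exp(−2·(B T − B t)) • (Σ_t * Σ_t * (Σ_T)⁻¹ * ((Σ_T)⁻¹ − I)) and Σ̂_t = (Σ_T)⁻¹ * Σ_t. Then the ranges of the linear endomorphisms of ℝ^d induced by the three matrices Σ_t, Σ̃_t and Σ̂_t coincide: LinearMap.range (Matrix.toLin' Σ_t) = LinearMap.range (Matrix.toLin' Σ̃_t) = LinearMap.range (Matrix.toLin' Σ̂_t). -/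
open Matrix

theorem range_mul_unit_aux {d : ℕ} (A U : Matrix (Fin d) (Fin d) ℝ) (hU : IsUnit U) :
    LinearMap.range (Matrix.toLin' (A * U)) = LinearMap.range (Matrix.toLin' A) := by
  rw [Matrix.toLin'_mul]
  apply LinearMap.range_comp_of_range_eq_top
  rw [LinearMap.range_eq_top]
  obtain ⟨V, hV⟩ := hU.exists_right_inv
  intro x
  refine ⟨Matrix.toLin' V x, ?_⟩
  rw [← LinearMap.comp_apply, ← Matrix.toLin'_mul, hV]
  simp

/-- Proposition 4 (range equality): the covariances `Σ_t`, `Σ̃_t` and `Σ̂_t` of the exact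
forward marginal, the generative backward SDE marginal and the generative probability flow
ODE marginal share the same range. -/
theorem generative_marginal_ranges
    (d : ℕ) (S : Matrix (Fin d) (Fin d) ℝ)
    (hS_sym : S.IsSymm) (hS_psd : S.PosSemidef)
    (β : ℝ → ℝ) (hβ : Continuous β) (hβpos : ∀ s, 0 < β s)
    (B : ℝ → ℝ) (hB : ∀ t, B t = ∫ s in (0:ℝ)..t, β s)
    (St : ℝ → Matrix (Fin d) (Fin d) ℝ)
    (hSt : ∀ t, St t = Real.exp (-2 * B t) • S
      + (1 - Real.exp (-2 * B t)) • (1 : Matrix (Fin d) (Fin d) ℝ))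
    (T : ℝ) (hT : 0 < T) (t : ℝ) (ht : t ∈ Set.Icc (0 : ℝ) T)
    (Stld Shat : Matrix (Fin d) (Fin d) ℝ)
    (hStld : Stld = St t + Real.exp (-2 * (B T - B t)) •
      (St t * St t * (St T)⁻¹ * ((St T)⁻¹ - (1 : Matrix (Fin d) (Fin d) ℝ))))
    (hShat : Shat = (St T)⁻¹ * St t) :
    LinearMap.range (Matrix.toLin' (St t)) = LinearMap.range (Matrix.toLin' Stld)
      ∧ LinearMap.range (Matrix.toLin' Stld) = LinearMap.range (Matrix.toLin' Shat) := by
  have hint : ∀ a b, IntervalIntegrable β MeasureTheory.volume a b :=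
    fun a b => hβ.intervalIntegrable a b
  have hsub : ∀ a b, B b - B a = ∫ s in a..b, β s := by
    intro a b
    rw [hB, hB, intervalIntegral.integral_interval_sub_left (hint _ _) (hint _ _)]
  have hlt : ∀ a b, a < b → B a < B b := by
    intro a b hab
    have := intervalIntegral.intervalIntegral_pos_of_pos (hint a b) hβpos hab
    linarith [hsub a b]
  have hB0 : B 0 = 0 := by simp [hB]
  have hpsd : ∀ r, 0 ≤ r → (St r).PosSemidef := by
    intro r hr
    have h0 : 0 ≤ B r := by
      rcases hr.eq_or_lt with h | h
      · rw [← h, hB0]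
      · linarith [hlt 0 r h]
    rw [hSt]
    exact (hS_psd.smul (Real.exp_pos _).le).add (Matrix.PosSemidef.one.smul (by
      have : Real.exp (-2 * B r) ≤ 1 := Real.exp_le_one_iff.2 (by linarith)
      linarith))
  have hpd : (St T).PosDef := by
    rw [hSt]
    refine Matrix.PosDef.posSemidef_add (hS_psd.smul (Real.exp_pos _).le)
      (Matrix.PosDef.one.smul ?_)
    have : Real.exp (-2 * B T) < 1 := Real.exp_lt_one_iff.2 (by linarith [hlt 0 T hT])
    linarith
  set c := Real.exp (-2 * (B T - B t)) with hc
  have hc0 : 0 < c := Real.exp_pos _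
  have hcexp : c * Real.exp (-2 * B t) = Real.exp (-2 * B T) := by
    rw [hc, ← Real.exp_add]; congr 1; ring
  have hQ : St T = c • St t + (1 - c) • (1 : Matrix (Fin d) (Fin d) ℝ) := by
    rw [hSt T, hSt t, ← hcexp]; module
  have hA := hpsd t ht.1
  have hN : (c • St t + (1 - c) • St T).PosDef := by
    rcases ht.2.eq_or_lt with h | h
    · have : c = 1 := by rw [hc, h]; simp
      rw [this, h]; simpa using hpd
    · refine Matrix.PosDef.posSemidef_add (hA.smul hc0.le) (hpd.smul ?_)
      have : c < 1 := Real.exp_lt_one_iff.2 (by linarith [hlt t T h])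
      linarith
  have hdet : IsUnit (St T).det := (Matrix.isUnit_iff_isUnit_det _).1 hpd.isUnit
  have hQP : St T * (St T)⁻¹ = 1 := Matrix.mul_nonsing_inv _ hdet
  have hPQ : (St T)⁻¹ * St T = 1 := Matrix.nonsing_inv_mul _ hdet
  have hPu : IsUnit (St T)⁻¹ := IsUnit.of_mul_eq_one _ hPQ
  have hNeq : c • St t + (1 - c) • St T = St T * St T + c • (St t * (1 - St T)) := by
    rw [hQ]
    simp only [mul_add, add_mul, mul_sub, mul_one, one_mul, smul_mul_assoc, mul_smul_comm]
    module
  generalize St T = Q at *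
  generalize St t = A at *
  have hcomm : Q * A = A * Q := by
    rw [hQ]; simp [mul_add, add_mul]
  have hcommP : Q⁻¹ * A = A * Q⁻¹ := by
    calc Q⁻¹ * A = Q⁻¹ * (A * (Q * Q⁻¹)) := by rw [hQP, mul_one]
      _ = Q⁻¹ * (A * Q) * Q⁻¹ := by simp only [mul_assoc]
      _ = (Q⁻¹ * Q) * A * Q⁻¹ := by rw [← hcomm]; simp only [mul_assoc]
      _ = A * Q⁻¹ := by rw [hPQ, one_mul]
  have hM : Stld = A * ((c • A + (1 - c) • Q) * Q⁻¹ * Q⁻¹) := by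
    have h1 : Q * Q * Q⁻¹ * Q⁻¹ = 1 := by rw [mul_assoc Q Q, hQP, mul_one, hQP]
    have h2 : (1 - Q) * Q⁻¹ * Q⁻¹ = Q⁻¹ * (Q⁻¹ - 1) := by
      rw [sub_mul, hQP, one_mul, sub_mul, one_mul, mul_sub, mul_one]
    have h3 : c • (A * (1 - Q)) * Q⁻¹ * Q⁻¹ = c • (A * ((1 - Q) * Q⁻¹ * Q⁻¹)) := by
      simp only [smul_mul_assoc, mul_assoc]
    rw [hStld, hNeq, add_mul, add_mul, h1, h3, h2, mul_add, mul_one]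
    simp only [mul_smul_comm, mul_assoc]
  have e1 : LinearMap.range (Matrix.toLin' Stld) = LinearMap.range (Matrix.toLin' A) := by
    rw [hM]; exact range_mul_unit_aux _ _ ((hN.isUnit.mul hPu).mul hPu)
  have e2 : LinearMap.range (Matrix.toLin' Shat) = LinearMap.range (Matrix.toLin' A) := by
    rw [hShat, hcommP]; exact range_mul_unit_aux _ _ hPu
  exact ⟨e1.symm, e1.trans e2.symm⟩
end

section
/- Let a, c, λ be real numbers with 0 < c, c < 1, c ≤ a ≤ 1 and λ ≥ 0. Set λ_t = a·λ + 1 − a, λ_T = c·λ + 1 − c, λ̃ = λ_t + (c/a)·λ_t²·(1/λ_T)·(1/λ_T − 1) and λ̂ = λ_t/λ_T. Then λ̃ lies between λ_t and λ̂, i.e. min λ_t λ̂ ≤ λ̃ ∧ λ̃ ≤ max λ_t λ̂. -/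
/-- Eigenvalue sandwich underlying the case analysis in the proof of Proposition 4:
the SDE generative eigenvalue `λ̃` lies between the exact eigenvalue `λ_t` and the
ODE generative eigenvalue `λ̂`. -/
theorem eigenvalue_sandwich
    (a c lam : ℝ) (hc : 0 < c) (hc1 : c < 1) (hca : c ≤ a) (ha : a ≤ 1) (hlam : 0 ≤ lam)
    (lamt lamT lamtld lamhat : ℝ)
    (hlamt : lamt = a * lam + 1 - a)
    (hlamT : lamT = c * lam + 1 - c)
    (hlamtld : lamtld = lamt + (c / a) * lamt ^ 2 * (1 / lamT) * (1 / lamT - 1))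
    (hlamhat : lamhat = lamt / lamT) :
    min lamt lamhat ≤ lamtld ∧ lamtld ≤ max lamt lamhat := by
  have ha0 : 0 < a := lt_of_lt_of_le hc hca
  have hT : 0 < lamT := by nlinarith [mul_nonneg hc.le hlam]
  have ht : 0 ≤ lamt := by nlinarith [mul_nonneg ha0.le hlam]
  obtain ⟨θ, hθ⟩ : ∃ θ, θ = c * lamt / (a * lamT) := ⟨_, rfl⟩
  have h0 : 0 ≤ θ := by rw [hθ]; positivity
  have h1 : θ ≤ 1 := by
    rw [hθ, div_le_one (by positivity), hlamt, hlamT]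
    nlinarith
  have key : lamtld = lamt + θ * (lamhat - lamt) := by
    rw [hlamtld, hlamhat, hθ]
    field_simp
  rw [key]
  rcases le_total lamt lamhat with h | h
  · rw [min_eq_left h, max_eq_right h]
    constructor <;> nlinarith
  · rw [min_eq_right h, max_eq_left h]
    constructor <;> nlinarith
end

section
/- Let a, c, λ be real numbers with 0 < c, c < 1, c ≤ a ≤ 1 and λ ≥ 0. Set λ_t = a·λ + 1 − a, λ_T = c·λ + 1 − c, λ̃ = λ_t + (c/a)·λ_t²·(1/λ_T)·(1/λ_T − 1) and λ̂ = λ_t/λ_T. Then |Real.sqrt λ_t − Real.sqrt λ̃| ≤ |Real.sqrt λ_t − Real.sqrt λ̂|. -/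
/-- Core eigenvalue-wise inequality of Proposition 4: the square-root eigenvalue gap of the
generative backward SDE marginal is no larger than that of the generative probability flow
ODE marginal, hence `W₂(p̃_t, p_t) ≤ W₂(p̂_t, p_t)`. -/
theorem sde_better_than_ode_eigenvalue
    (a c lam : ℝ) (hc : 0 < c) (hc1 : c < 1) (hca : c ≤ a) (ha : a ≤ 1) (hlam : 0 ≤ lam)
    (lamt lamT lamtld lamhat : ℝ)
    (hlamt : lamt = a * lam + 1 - a)
    (hlamT : lamT = c * lam + 1 - c)
    (hlamtld : lamtld = lamt + (c / a) * lamt ^ 2 * (1 / lamT) * (1 / lamT - 1))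
    (hlamhat : lamhat = lamt / lamT) :
    |Real.sqrt lamt - Real.sqrt lamtld| ≤ |Real.sqrt lamt - Real.sqrt lamhat| := by
  have ha0 : 0 < a := lt_of_lt_of_le hc hca
  have hy : 0 < lamT := by rw [hlamT]; nlinarith
  have hx : 0 ≤ lamt := by rw [hlamt]; nlinarith
  have hr0 : 0 ≤ (c * lamt) / (a * lamT) := by positivity
  have hr1 : (c * lamt) / (a * lamT) ≤ 1 := by
    rw [div_le_one (by positivity), hlamt, hlamT]; nlinarith
  have e1 : lamtld = lamt + (c * lamt) / (a * lamT) * (lamhat - lamt) := by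
    rw [hlamtld, hlamhat]; field_simp
  generalize (c * lamt) / (a * lamT) = r at *
  rcases le_total lamt lamhat with h | h
  · have h1 : lamt ≤ lamtld := by nlinarith
    have h2 : lamtld ≤ lamhat := by nlinarith
    have s1 := Real.sqrt_le_sqrt h1
    have s2 := Real.sqrt_le_sqrt h2
    rw [abs_of_nonpos (by linarith), abs_of_nonpos (by linarith)]
    linarith
  · have h1 : lamtld ≤ lamt := by nlinarith
    have h2 : lamhat ≤ lamtld := by nlinarith
    have s1 := Real.sqrt_le_sqrt h1
    have s2 := Real.sqrt_le_sqrt h2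
    rw [abs_of_nonneg (by linarith), abs_of_nonneg (by linarith)]
    linarith
end

section
/- Let n : ℕ, let a, c be real numbers with 0 < c, c < 1, c ≤ a ≤ 1, and let λ : Fin n → ℝ with λ i ≥ 0 for all i. For each i set λ_t i = a·λ i + 1 − a, λ_T i = c·λ i + 1 − c, λ̃ i = λ_t i + (c/a)·(λ_t i)²·(1/λ_T i)·(1/λ_T i − 1) and λ̂ i = λ_t i / λ_T i. Then ∑_{i} (Real.sqrt (λ_t i) − Real.sqrt (λ̃ i))² ≤ ∑_{i} (Real.sqrt (λ_t i) − Real.sqrt (λ̂ i))². -/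
/-- Proposition 4: `W₂(p̃_t, p_t)² ≤ W₂(p̂_t, p_t)²`, expressed via equation (10) as an
inequality between sums of squared square-root eigenvalue gaps — for Gaussian data with
known score, the SDE sampler is a better sampler than the ODE sampler. -/
theorem sde_better_than_ode_wasserstein
    (n : ℕ) (a c : ℝ) (hc : 0 < c) (hc1 : c < 1) (hca : c ≤ a) (ha : a ≤ 1)
    (lam : Fin n → ℝ) (hlam : ∀ i, 0 ≤ lam i)
    (lamt lamT lamtld lamhat : Fin n → ℝ)
    (hlamt : ∀ i, lamt i = a * lam i + 1 - a)
    (hlamT : ∀ i, lamT i = c * lam i + 1 - c)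
    (hlamtld : ∀ i, lamtld i
      = lamt i + (c / a) * (lamt i) ^ 2 * (1 / lamT i) * (1 / lamT i - 1))
    (hlamhat : ∀ i, lamhat i = lamt i / lamT i) :
    ∑ i, (Real.sqrt (lamt i) - Real.sqrt (lamtld i)) ^ 2
      ≤ ∑ i, (Real.sqrt (lamt i) - Real.sqrt (lamhat i)) ^ 2 := by
  apply Finset.sum_le_sum
  intro i _
  have ha0 : 0 < a := lt_of_lt_of_le hc hca
  have hL := hlam i
  have hT : 0 < lamT i := by rw [hlamT]; nlinarith [mul_nonneg hc.le hL]
  have hs : 0 ≤ lamt i := by rw [hlamt]; nlinarith [mul_nonneg ha0.le hL]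
  obtain ⟨k, hk⟩ : ∃ k, k = c * lamt i / (a * lamT i) := ⟨_, rfl⟩
  have hk0 : 0 ≤ k := by rw [hk]; positivity
  have hk1 : k ≤ 1 := by
    rw [hk, div_le_one (by positivity), hlamt, hlamT]
    nlinarith
  obtain ⟨d, hd⟩ : ∃ d, d = lamt i * (1 / lamT i - 1) := ⟨_, rfl⟩
  have h1 : lamtld i = lamt i + k * d := by
    rw [hlamtld, hk, hd]; field_simp
  have h2 : lamhat i = lamt i + d := by
    rw [hlamhat, hd]; field_simp; ring
  rw [h1, h2]
  rcases le_total 0 d with h | h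
  · have e1 := Real.sqrt_le_sqrt (show lamt i ≤ lamt i + k * d by nlinarith)
    have e2 := Real.sqrt_le_sqrt (show lamt i + k * d ≤ lamt i + d by nlinarith)
    nlinarith
  · have e1 := Real.sqrt_le_sqrt (show lamt i + k * d ≤ lamt i by nlinarith)
    have e2 := Real.sqrt_le_sqrt (show lamt i + d ≤ lamt i + k * d by nlinarith)
    nlinarith
end

section
/- Let d : ℕ, let Σ be a real symmetric positive semidefinite d×d matrix, let β : ℝ → ℝ be continuous with β s > 0 for all s, set B t = ∫_0^t β s ds and Σ_t = exp(−2·B t)·Σ + (1 − exp(−2·B t))·I. Fix reals Δ > 0, b > 0 and s > 0, and set E = I + (Δ·b) • (I − 2 • (Σ_s)⁻¹). If v ∈ ℝ^d and λ ≥ 0 satisfy Σ.mulVec v = λ • v, and M is a d×d real matrix with M.mulVec v = μ • v, then (E * M * Eᵀ + (2·Δ·b) • I).mulVec v = ((1 + Δ·b·(1 − 2/λ_s))²·μ + 2·Δ·b) • v, where λ_s = exp(−2·B s)·λ + 1 − exp(−2·B s). -/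
open Matrix

/-- Equation (18): eigenvalue recursion of one Euler–Maruyama step of the backward SDE.
One step maps a Gaussian with covariance `M` to one with covariance `E M Eᵀ + 2Δb I`,
where `E = I + Δb (I - 2 Σ_s⁻¹)`; in an eigenbasis of `Σ` the eigenvalue `μ` of `M` is
mapped to `(1 + Δb (1 - 2/λ_s))² μ + 2Δb`. -/
theorem euler_maruyama_eigenvalue_recursion
    (d : ℕ) (S : Matrix (Fin d) (Fin d) ℝ)
    (hS_sym : S.IsSymm) (hS_psd : S.PosSemidef)
    (β : ℝ → ℝ) (hβ : Continuous β) (hβpos : ∀ s, 0 < β s)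
    (B : ℝ → ℝ) (hB : ∀ t, B t = ∫ s in (0:ℝ)..t, β s)
    (St : ℝ → Matrix (Fin d) (Fin d) ℝ)
    (hSt : ∀ t, St t = Real.exp (-2 * B t) • S
      + (1 - Real.exp (-2 * B t)) • (1 : Matrix (Fin d) (Fin d) ℝ))
    (Δ b s : ℝ) (hΔ : 0 < Δ) (hb : 0 < b) (hs : 0 < s)
    (E : Matrix (Fin d) (Fin d) ℝ)
    (hE : E = 1 + (Δ * b) • ((1 : Matrix (Fin d) (Fin d) ℝ) - (2 : ℝ) • (St s)⁻¹))
    (v : Fin d → ℝ) (lam : ℝ) (hlam : 0 ≤ lam) (hv : S.mulVec v = lam • v)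
    (M : Matrix (Fin d) (Fin d) ℝ) (μ : ℝ) (hM : M.mulVec v = μ • v)
    (lams : ℝ)
    (hlams : lams = Real.exp (-2 * B s) * lam + 1 - Real.exp (-2 * B s)) :
    (E * M * Eᵀ + (2 * Δ * b) • (1 : Matrix (Fin d) (Fin d) ℝ)).mulVec v
      = ((1 + Δ * b * (1 - 2 / lams)) ^ 2 * μ + 2 * Δ * b) • v := by
  have hBpos : 0 < B s := by
    rw [hB]
    exact intervalIntegral.intervalIntegral_pos_of_pos (hβ.intervalIntegrable _ _) hβpos hs
  have he1 : Real.exp (-2 * B s) < 1 := by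
    rw [Real.exp_lt_one_iff]; linarith
  have he0 := Real.exp_pos (-2 * B s)
  have hls : 0 < lams := by
    rw [hlams]
    have := mul_nonneg he0.le hlam
    linarith
  have hPD : (St s).PosDef := by
    rw [hSt]
    exact Matrix.PosDef.posSemidef_add (hS_psd.smul he0.le)
      (Matrix.PosDef.one.smul (by linarith : (0:ℝ) < 1 - Real.exp (-2 * B s)))
  have hdet : IsUnit (St s).det := hPD.det_pos.ne'.isUnit
  have hSv : (St s).mulVec v = lams • v := by
    rw [hSt, Matrix.add_mulVec, Matrix.smul_mulVec, Matrix.smul_mulVec, Matrix.one_mulVec, hv,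
      hlams, smul_smul, ← add_smul]
    congr 1; ring
  have hinv : (St s)⁻¹.mulVec v = (1 / lams) • v := by
    have h1 : (St s)⁻¹.mulVec ((St s).mulVec v) = v := by
      rw [Matrix.mulVec_mulVec, Matrix.nonsing_inv_mul _ hdet, Matrix.one_mulVec]
    rw [hSv, Matrix.mulVec_smul] at h1
    nth_rewrite 2 [← h1]
    rw [smul_smul, one_div, inv_mul_cancel₀ hls.ne', one_smul]
  have hSts : (St s)ᵀ = St s := by
    rw [hSt, Matrix.transpose_add, Matrix.transpose_smul, Matrix.transpose_smul,
      Matrix.transpose_one, hS_sym.eq]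
  have hEt : Eᵀ = E := by
    rw [hE, Matrix.transpose_add, Matrix.transpose_smul, Matrix.transpose_sub,
      Matrix.transpose_smul, Matrix.transpose_one, Matrix.transpose_nonsing_inv, hSts]
  have hEv : E.mulVec v = (1 + Δ * b * (1 - 2 / lams)) • v := by
    rw [hE, Matrix.add_mulVec, Matrix.smul_mulVec, Matrix.sub_mulVec, Matrix.smul_mulVec,
      Matrix.one_mulVec, hinv]
    ext i
    simp only [Pi.add_apply, Pi.smul_apply, Pi.sub_apply, smul_eq_mul]
    ring
  rw [hEt, Matrix.add_mulVec, Matrix.smul_mulVec, Matrix.one_mulVec, ← Matrix.mulVec_mulVec,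
    ← Matrix.mulVec_mulVec, hEv, Matrix.mulVec_smul, hM, Matrix.mulVec_smul, Matrix.mulVec_smul,
    hEv]
  ext i
  simp only [Pi.add_apply, Pi.smul_apply, smul_eq_mul]
  ring
end

section
/- Let M N : ℕ with M > 0 and N > 0, let G = ZMod M × ZMod N, and let t : Fin 3 → G → ℝ. Define the ADSN covariance matrix Σ : Matrix (Fin 3 × G) (Fin 3 × G) ℝ by Σ ((i,x),(j,y)) = ∑_{z ∈ G} t i (x − z) · t j (y − z), the character χ_ξ : G → ℂ, χ_ξ (x₁,x₂) = Complex.exp (2·π·Complex.I·((x₁.val·ξ₁.val : ℝ)/M + (x₂.val·ξ₂.val : ℝ)/N)) for ξ = (ξ₁,ξ₂) ∈ G, and the discrete Fourier coefficients t̂ i ξ = ∑_{x ∈ G} (t i x : ℂ) · conj (χ_ξ x). Then for every ξ ∈ G, the vector u : Fin 3 × G → ℂ, u (i,x) = t̂ i ξ · χ_ξ x, satisfies (Σ.map (↑· : ℝ → ℂ)).mulVec u = (∑_{c : Fin 3} Complex.normSq (t̂ c ξ) : ℂ) • u. -/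
open Matrix Complex

/-- Appendix F.2, equation (33): for each frequency `ξ`, the vector
`u (i, x) = t̂ i ξ · χ_ξ x` is an eigenvector of the (complexified) ADSN covariance matrix
with eigenvalue `|t̂ 0 ξ|² + |t̂ 1 ξ|² + |t̂ 2 ξ|²`. -/
theorem adsn_covariance_eigenvector
    (M N : ℕ) [NeZero M] [NeZero N] (hM : 0 < M) (hN : 0 < N)
    (t : Fin 3 → ZMod M × ZMod N → ℝ)
    (S : Matrix (Fin 3 × (ZMod M × ZMod N)) (Fin 3 × (ZMod M × ZMod N)) ℝ)
    (hS : ∀ i j x y, S (i, x) (j, y) = ∑ z : ZMod M × ZMod N, t i (x - z) * t j (y - z))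
    (χ : ZMod M × ZMod N → ZMod M × ZMod N → ℂ)
    (hχ : ∀ ξ x, χ ξ x = Complex.exp (2 * Real.pi * Complex.I *
      ((((x.1.val * ξ.1.val : ℕ) : ℝ) / M + ((x.2.val * ξ.2.val : ℕ) : ℝ) / N : ℝ) : ℂ)))
    (that : Fin 3 → ZMod M × ZMod N → ℂ)
    (hthat : ∀ i ξ, that i ξ
      = ∑ x : ZMod M × ZMod N, (t i x : ℂ) * (starRingEnd ℂ) (χ ξ x))
    (ξ : ZMod M × ZMod N)
    (u : Fin 3 × (ZMod M × ZMod N) → ℂ)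
    (hu : ∀ i x, u (i, x) = that i ξ * χ ξ x) :
    (S.map (fun r : ℝ => (r : ℂ))).mulVec u
      = ((∑ c : Fin 3, Complex.normSq (that c ξ) : ℝ) : ℂ) • u := by
  have hstd : ∀ x, χ ξ x = ZMod.stdAddChar (x.1 * ξ.1) * ZMod.stdAddChar (x.2 * ξ.2) := by
    intro x
    have h1 : x.1 * ξ.1 = (((x.1.val * ξ.1.val : ℕ) : ℤ) : ZMod M) := by simp
    have h2 : x.2 * ξ.2 = (((x.2.val * ξ.2.val : ℕ) : ℤ) : ZMod N) := by simp
    rw [h1, h2, ZMod.stdAddChar_coe, ZMod.stdAddChar_coe, ← Complex.exp_add, hχ]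
    congr 1
    push_cast
    ring
  have hadd : ∀ x y, χ ξ (x + y) = χ ξ x * χ ξ y := by
    intro x y
    simp only [hstd, Prod.fst_add, Prod.snd_add, add_mul, AddChar.map_add_eq_mul]
    ring
  have hconj : ∀ x, χ ξ x * (starRingEnd ℂ) (χ ξ x) = 1 := by
    intro x
    rw [hχ, ← Complex.exp_conj, ← Complex.exp_add]
    simp only [map_mul, Complex.conj_ofReal, Complex.conj_I, map_ofNat]
    rw [← Complex.exp_zero]
    congr 1
    ring
  have hsub : ∀ x w, χ ξ (x - w) = χ ξ x * (starRingEnd ℂ) (χ ξ w) := by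
    intro x w
    have h := hadd (x - w) w
    rw [sub_add_cancel] at h
    rw [h, mul_assoc, hconj, mul_one]
  have hA : ∀ j z, ∑ y, (t j (y - z) : ℂ) * χ ξ y = χ ξ z * (starRingEnd ℂ) (that j ξ) := by
    intro j z
    rw [← Equiv.sum_comp (Equiv.addRight z), hthat, map_sum, Finset.mul_sum]
    refine Finset.sum_congr rfl fun y _ => ?_
    simp only [Equiv.coe_addRight, add_sub_cancel_right, hadd, map_mul, Complex.conj_ofReal,
      Complex.conj_conj]
    ring
  have hB : ∀ i x, ∑ z, (t i (x - z) : ℂ) * χ ξ z = χ ξ x * that i ξ := by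
    intro i x
    rw [← Equiv.sum_comp (Equiv.subLeft x), hthat, Finset.mul_sum]
    refine Finset.sum_congr rfl fun y _ => ?_
    simp only [Equiv.subLeft_apply, sub_sub_cancel, hsub]
    ring
  ext ⟨i, x⟩
  simp only [Matrix.mulVec, dotProduct, Matrix.map_apply, Pi.smul_apply, smul_eq_mul]
  rw [Fintype.sum_prod_type, Complex.ofReal_sum, Finset.sum_mul]
  refine Finset.sum_congr rfl fun j _ => ?_
  calc ∑ y, ((S (i, x) (j, y) : ℝ) : ℂ) * u (j, y)
      = ∑ y, ∑ z, (t i (x - z) : ℂ) * that j ξ * ((t j (y - z) : ℂ) * χ ξ y) := by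
        refine Finset.sum_congr rfl fun y _ => ?_
        rw [hS, hu, Complex.ofReal_sum, Finset.sum_mul]
        refine Finset.sum_congr rfl fun z _ => ?_
        push_cast
        ring
    _ = ∑ z, (that j ξ * (starRingEnd ℂ) (that j ξ)) * ((t i (x - z) : ℂ) * χ ξ z) := by
        rw [Finset.sum_comm]
        refine Finset.sum_congr rfl fun z _ => ?_
        rw [← Finset.mul_sum, hA]
        ring
    _ = _ := by
        rw [← Finset.mul_sum, hB, Complex.mul_conj, hu]
        ring
end

section
/- Let M N : ℕ with M > 0 and N > 0, let G = ZMod M × ZMod N, and let t : Fin 3 → G → ℝ. Define the ADSN covariance matrix Σ : Matrix (Fin 3 × G) (Fin 3 × G) ℝ by Σ ((i,x),(j,y)) = ∑_{z ∈ G} t i (x − z) · t j (y − z), the character χ_ξ : G → ℂ, χ_ξ (x₁,x₂) = Complex.exp (2·π·Complex.I·((x₁.val·ξ₁.val : ℝ)/M + (x₂.val·ξ₂.val : ℝ)/N)) for ξ = (ξ₁,ξ₂) ∈ G, and the discrete Fourier coefficients t̂ i ξ = ∑_{x ∈ G} (t i x : ℂ) · conj (χ_ξ x). Then for every ξ ∈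 G, the vectors u², u³ : Fin 3 × G → ℂ given by u² (i,x) = a_i · χ_ξ x with (a₀,a₁,a₂) = (−conj (t̂ 2 ξ), 0, conj (t̂ 0 ξ)) and u³ (i,x) = b_i · χ_ξ x with (b₀,b₁,b₂) = (0, −conj (t̂ 2 ξ), conj (t̂ 1 ξ)) satisfy (Σ.map (↑· : ℝ → ℂ)).mulVec u² = 0 and (Σ.map (↑· : ℝ → ℂ)).mulVec u³ = 0. -/
open Matrix Complex

lemma adsn_char_aux (M : ℕ) [NeZero M] (x k : ZMod M) :
    (ZMod.stdAddChar (x * k) : ℂ)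
      = Complex.exp (2 * Real.pi * Complex.I * (((x.val * k.val : ℕ) : ℂ) / M)) := by
  have h : x * k = (((x.val * k.val : ℕ) : ℤ) : ZMod M) := by
    push_cast
    simp
  rw [h, ZMod.stdAddChar_coe]
  congr 1
  push_cast
  ring

lemma adsn_kernel_aux {G : Type*} [AddCommGroup G] [Fintype G]
    (t : Fin 3 → G → ℝ) (S : Matrix (Fin 3 × G) (Fin 3 × G) ℝ)
    (hS : ∀ i j x y, S (i, x) (j, y) = ∑ z : G, t i (x - z) * t j (y - z))
    (c : G → ℂ) (hc : ∀ x y, c (x + y) = c x * c y)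
    (a : Fin 3 → ℂ) (u : Fin 3 × G → ℂ) (hu : ∀ i x, u (i, x) = a i * c x)
    (ha : ∑ j, a j * ∑ y, (t j y : ℂ) * c y = 0) :
    (S.map (fun r : ℝ => (r : ℂ))).mulVec u = 0 := by
  have hshift : ∀ j z, ∑ y, (t j (y - z) : ℂ) * c y = c z * ∑ y, (t j y : ℂ) * c y := by
    intro j z
    rw [← Equiv.sum_comp (Equiv.addRight z), Finset.mul_sum]
    refine Finset.sum_congr rfl fun y _ => ?_
    simp only [Equiv.coe_addRight, add_sub_cancel_right, hc]
    ring
  funext p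
  obtain ⟨i, x⟩ := p
  simp only [Matrix.mulVec, dotProduct, Matrix.map_apply, Pi.zero_apply, Fintype.sum_prod_type,
    hS, hu]
  calc ∑ j, ∑ y, ((∑ z, t i (x - z) * t j (y - z) : ℝ) : ℂ) * (a j * c y)
      = ∑ j, ∑ z, (t i (x - z) : ℂ) * a j * ∑ y, (t j (y - z) : ℂ) * c y := by
        refine Finset.sum_congr rfl fun j _ => ?_
        simp only [Complex.ofReal_sum, Complex.ofReal_mul, Finset.sum_mul, Finset.mul_sum]
        rw [Finset.sum_comm]
        refine Finset.sum_congr rfl fun z _ => Finset.sum_congr rfl fun y _ => ?_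
        ring
    _ = ∑ z, (t i (x - z) : ℂ) * c z * ∑ j, a j * ∑ y, (t j y : ℂ) * c y := by
        rw [Finset.sum_comm]
        refine Finset.sum_congr rfl fun z _ => ?_
        rw [Finset.mul_sum]
        refine Finset.sum_congr rfl fun j _ => ?_
        rw [hshift]
        ring
    _ = 0 := by simp [ha]

/-- Appendix F.2: for each frequency `ξ`, the two explicit vectors
`u² (i, x) = ![-(conj (t̂ 2 ξ)), 0, conj (t̂ 0 ξ)] i · χ_ξ x` and
`u³ (i, x) = ![0, -(conj (t̂ 2 ξ)), conj (t̂ 1 ξ)] i · χ_ξ x`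
lie in the kernel of the (complexified) ADSN covariance matrix, so `0` is an eigenvalue
of multiplicity at least `2MN`. -/
theorem adsn_covariance_kernel_vectors
    (M N : ℕ) [NeZero M] [NeZero N] (hM : 0 < M) (hN : 0 < N)
    (t : Fin 3 → ZMod M × ZMod N → ℝ)
    (S : Matrix (Fin 3 × (ZMod M × ZMod N)) (Fin 3 × (ZMod M × ZMod N)) ℝ)
    (hS : ∀ i j x y, S (i, x) (j, y) = ∑ z : ZMod M × ZMod N, t i (x - z) * t j (y - z))
    (χ : ZMod M × ZMod N → ZMod M × ZMod N → ℂ)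
    (hχ : ∀ ξ x, χ ξ x = Complex.exp (2 * Real.pi * Complex.I *
      ((((x.1.val * ξ.1.val : ℕ) : ℝ) / M + ((x.2.val * ξ.2.val : ℕ) : ℝ) / N : ℝ) : ℂ)))
    (that : Fin 3 → ZMod M × ZMod N → ℂ)
    (hthat : ∀ i ξ, that i ξ
      = ∑ x : ZMod M × ZMod N, (t i x : ℂ) * (starRingEnd ℂ) (χ ξ x))
    (ξ : ZMod M × ZMod N)
    (u₂ u₃ : Fin 3 × (ZMod M × ZMod N) → ℂ)
    (hu₂ : ∀ i x, u₂ (i, x)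
      = ![-(starRingEnd ℂ) (that 2 ξ), 0, (starRingEnd ℂ) (that 0 ξ)] i * χ ξ x)
    (hu₃ : ∀ i x, u₃ (i, x)
      = ![0, -(starRingEnd ℂ) (that 2 ξ), (starRingEnd ℂ) (that 1 ξ)] i * χ ξ x) :
    (S.map (fun r : ℝ => (r : ℂ))).mulVec u₂ = 0
      ∧ (S.map (fun r : ℝ => (r : ℂ))).mulVec u₃ = 0 := by
  have hχ' : ∀ x, χ ξ x = ZMod.stdAddChar (x.1 * ξ.1) * ZMod.stdAddChar (x.2 * ξ.2) := by
    intro x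
    rw [hχ, adsn_char_aux, adsn_char_aux, ← Complex.exp_add]
    congr 1
    push_cast
    ring
  have hc : ∀ x y, χ ξ (x + y) = χ ξ x * χ ξ y := by
    intro x y
    simp only [hχ', Prod.fst_add, Prod.snd_add, add_mul, AddChar.map_add_eq_mul]
    ring
  have hconj : ∀ j, ∑ y, (t j y : ℂ) * χ ξ y = (starRingEnd ℂ) (that j ξ) := by
    intro j
    simp [hthat]
  constructor
  · refine adsn_kernel_aux t S hS (χ ξ) hc _ u₂ hu₂ ?_
    simp only [hconj, Fin.sum_univ_three]
    simp
    ring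
  · refine adsn_kernel_aux t S hS (χ ξ) hc _ u₃ hu₃ ?_
    simp only [hconj, Fin.sum_univ_three]
    simp
    ring
end
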